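/- Let q be a nonzero real number. There exists a conjugate-linear, involutive, anti-multiplicative map * on the ℂ-algebra GL_q(2,-2) with z11* = z22 τ, z12* = q^{-1} z21 τ, z21* = q τ z12, z22* = τ z11 and τ* = z11 z22 + q^{-1} z12 z21, turning GL_q(2,-2) into a *-algebra (denoted U_q(2,-2)); moreover the coaction α : U_q(2,-2) → U_q(2) ⊗ U_q(2,-2) given by α(z_{ij}) = Σ_k x_{ik} ⊗ z_{kj} and α(τ) = t ⊗ τ is a *-homomorphism, where U_q(2) is GL_q(2) with its standard *-structure and the star on the tensor product is (a ⊗ b)* = a* ⊗ b*. -/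

import Mathlib

open TensorProduct

/-- The five generators `x11, x12, x21, x22, t` of the algebra `GL_q(2)`. -/
inductive XGen : Type
  | x11 | x12 | x21 | x22 | t

def Xf (k : Type) [Field k] : XGen → FreeAlgebra k XGen := FreeAlgebra.ι k

/-- The defining relations of `GL_q(2)`. -/
inductive GLq2Rel (k : Type) [Field k] (q : k) :
    FreeAlgebra k XGen → FreeAlgebra k XGen → Prop
  | r1 : GLq2Rel k q (Xf k .x12 * Xf k .x11) (q • (Xf k .x11 * Xf k .x12))
  | r2 : GLq2Rel k q (Xf k .x21 * Xf k .x11) (q • (Xf k .x11 * Xf k .x21))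
  | r3 : GLq2Rel k q (Xf k .x22 * Xf k .x12) (q • (Xf k .x12 * Xf k .x22))
  | r4 : GLq2Rel k q (Xf k .x22 * Xf k .x21) (q • (Xf k .x21 * Xf k .x22))
  | r5 : GLq2Rel k q (Xf k .x12 * Xf k .x21) (Xf k .x21 * Xf k .x12)
  | r6 : GLq2Rel k q (Xf k .x11 * Xf k .x22 - Xf k .x22 * Xf k .x11)
      ((q⁻¹ - q) • (Xf k .x12 * Xf k .x21))
  | r7 : GLq2Rel k q (Xf k .x11 * Xf k .t) (Xf k .t * Xf k .x11)
  | r8 : GLq2Rel k q (Xf k .x22 * Xf k .t) (Xf k .t * Xf k .x22)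
  | r9 : GLq2Rel k q (Xf k .x12 * Xf k .t) (Xf k .t * Xf k .x12)
  | r10 : GLq2Rel k q (Xf k .x21 * Xf k .t) (Xf k .t * Xf k .x21)
  | r11 : GLq2Rel k q ((Xf k .x11 * Xf k .x22 - q⁻¹ • (Xf k .x12 * Xf k .x21)) * Xf k .t) 1

/-- The algebra `GL_q(2)`. -/
abbrev GLq2 (k : Type) [Field k] (q : k) := RingQuot (GLq2Rel k q)

/-- The five generators `z11, z12, z21, z22, τ` of the algebra `GL_q(2,-2)`. -/
inductive ZGen : Type
  | z11 | z12 | z21 | z22 | tau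

def Zf (k : Type) [Field k] : ZGen → FreeAlgebra k ZGen := FreeAlgebra.ι k

/-- The defining relations of `GL_q(2,-2)`. -/
inductive GLq22Rel (k : Type) [Field k] (q : k) :
    FreeAlgebra k ZGen → FreeAlgebra k ZGen → Prop
  | r1 : GLq22Rel k q (Zf k .z12 * Zf k .z11) (-(q • (Zf k .z11 * Zf k .z12)))
  | r2 : GLq22Rel k q (Zf k .z21 * Zf k .z11) (q • (Zf k .z11 * Zf k .z21))
  | r3 : GLq22Rel k q (Zf k .z22 * Zf k .z12) (q • (Zf k .z12 * Zf k .z22))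
  | r4 : GLq22Rel k q (Zf k .z22 * Zf k .z21) (-(q • (Zf k .z21 * Zf k .z22)))
  | r5 : GLq22Rel k q (Zf k .z12 * Zf k .z21) (-(Zf k .z21 * Zf k .z12))
  | r6 : GLq22Rel k q (Zf k .z11 * Zf k .z22 + Zf k .z22 * Zf k .z11)
      ((q - q⁻¹) • (Zf k .z12 * Zf k .z21))
  | r7 : GLq22Rel k q (Zf k .z11 * Zf k .tau) (-(Zf k .tau * Zf k .z11))
  | r8 : GLq22Rel k q (Zf k .z22 * Zf k .tau) (-(Zf k .tau * Zf k .z22))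
  | r9 : GLq22Rel k q (Zf k .z12 * Zf k .tau) (-(Zf k .tau * Zf k .z12))
  | r10 : GLq22Rel k q (Zf k .z21 * Zf k .tau) (-(Zf k .tau * Zf k .z21))
  | r11 : GLq22Rel k q ((Zf k .z11 * Zf k .z22 + q⁻¹ • (Zf k .z12 * Zf k .z21)) * Zf k .tau) 1

/-- The algebra `GL_q(2,-2)`. -/
abbrev GLq22 (k : Type) [Field k] (q : k) := RingQuot (GLq22Rel k q)

noncomputable section

/-- The generating matrix entries `x_{ij}` of `GL_q(2)`. -/
def xM (k : Type) [Field k] (q : k) : Fin 2 → Fin 2 → GLq2 k q :=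
  ![![RingQuot.mkAlgHom k (GLq2Rel k q) (Xf k .x11),
     RingQuot.mkAlgHom k (GLq2Rel k q) (Xf k .x12)],
    ![RingQuot.mkAlgHom k (GLq2Rel k q) (Xf k .x21),
     RingQuot.mkAlgHom k (GLq2Rel k q) (Xf k .x22)]]

/-- The element `t` of `GL_q(2)`. -/
def tE (k : Type) [Field k] (q : k) : GLq2 k q := RingQuot.mkAlgHom k (GLq2Rel k q) (Xf k .t)

/-- The generating matrix entries `z_{ij}` of `GL_q(2,-2)`. -/
def zM (k : Type) [Field k] (q : k) : Fin 2 → Fin 2 → GLq22 k q :=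
  ![![RingQuot.mkAlgHom k (GLq22Rel k q) (Zf k .z11),
     RingQuot.mkAlgHom k (GLq22Rel k q) (Zf k .z12)],
    ![RingQuot.mkAlgHom k (GLq22Rel k q) (Zf k .z21),
     RingQuot.mkAlgHom k (GLq22Rel k q) (Zf k .z22)]]

/-- The element `τ` of `GL_q(2,-2)`. -/
def tauE (k : Type) [Field k] (q : k) : GLq22 k q :=
  RingQuot.mkAlgHom k (GLq22Rel k q) (Zf k .tau)

/-!
A star on `GL_q(2,-2)` is a conjugate-linear ring homomorphism to the opposite algebra, so by the
universal property it exists as soon as the prescribed images of the generators satisfy the defining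
relations in the opposite algebra. These images are the entries of the adjugate matrix
`(-z22, -q⁻¹ z21; q z12, z11)` multiplied by `τ`. Reversing the order of multiplication turns the
quadratic relations for `z` into those for its adjugate, and multiplying every entry by `τ`, which
anticommutes with all of them, preserves these relations because `(x τ) (y τ) = -(x y) τ²`. The
same identity shows that the new determinant is `τ`.

Involutivity of the star and compatibility with the coaction may then be checked on generators; the
latter holds on `τ` because `α(τ*)` and `α(τ)*` are both inverse to `α(τ)`.
-/

open MulOpposite

section Relations

variable {k B : Type*} [Field k] [Ring B] [Algebra k B] {q : k} {a b c d t : B}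

/-- The quadratic relations of `GL_q(2,-2)`, those not involving `τ`, imposed on the entries of a
matrix `!![a, b; c, d]` over an arbitrary algebra. -/
structure IsTwistedQuantumMatrix (q : k) (a b c d : B) : Prop where
  b_mul_a : b * a = -(q • (a * b))
  c_mul_a : c * a = q • (a * c)
  d_mul_b : d * b = q • (b * d)
  d_mul_c : d * c = -(q • (c * d))
  b_mul_c : b * c = -(c * b)
  a_mul_d_add_d_mul_a : a * d + d * a = (q - q⁻¹) • (b * c)

/-- The quantum determinant `a d + q⁻¹ b c` of `GL_q(2,-2)`. -/
def twistedDet (q : k) (a b c d : B) : B := a * d + q⁻¹ • (b * c)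

/-- All the relations of `GL_q(2,-2)`: the tuple `(a, b, c, d, t)` is a `B`-valued point of
`GL_q(2,-2)`. Anticommutation of `x` and `t` is encoded as `SemiconjBy x t (-t)`. -/
structure IsGLq22Point (q : k) (a b c d t : B) : Prop
    extends IsTwistedQuantumMatrix q a b c d where
  a_semiconj : SemiconjBy a t (-t)
  b_semiconj : SemiconjBy b t (-t)
  c_semiconj : SemiconjBy c t (-t)
  d_semiconj : SemiconjBy d t (-t)
  det_mul : twistedDet q a b c d * t = 1

theorem semiconjBy_neg_iff {x : B} : SemiconjBy x t (-t) ↔ x * t = -(t * x) := by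
  rw [SemiconjBy, neg_mul]

theorem mul_mul_mul_of_semiconjBy_neg (x : B) {y : B} (hy : SemiconjBy y t (-t)) :
    x * t * (y * t) = -(x * y * (t * t)) := by
  have hty : t * y = -(y * t) := by rw [semiconjBy_neg_iff.1 hy, neg_neg]
  rw [mul_assoc, ← mul_assoc t, hty]
  noncomm_ring

theorem commute_mul_of_semiconjBy_neg {x y : B} (hx : SemiconjBy x t (-t))
    (hy : SemiconjBy y t (-t)) : Commute (x * y) t := by
  change SemiconjBy (x * y) t t
  simpa using hx.neg_right.mul_left hy

theorem semiconjBy_neg_of_inverse {x D : B} (hx : SemiconjBy x t (-t)) (hDt : D * t = 1)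
    (htD : t * D = 1) : SemiconjBy x D (-D) := by
  let u : Bˣ := ⟨t, D, htD, hDt⟩
  have hu : SemiconjBy x (u : B) ((-u : Bˣ) : B) := hx
  simpa [u] using hu.units_inv_right

theorem semiconjBy_neg_op {x : B} (hx : SemiconjBy x t (-t)) :
    SemiconjBy (op x) (op t) (-op t) := by
  simpa using hx.op.neg_right

theorem semiconjBy_neg_smul (r : k) {x : B} (hx : SemiconjBy x t (-t)) :
    SemiconjBy (r • x) t (-t) := by
  rw [SemiconjBy, smul_mul_assoc, hx.eq, mul_smul_comm]

namespace IsTwistedQuantumMatrix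

theorem adjugate (hq : q ≠ 0) (h : IsTwistedQuantumMatrix q a b c d) :
    IsTwistedQuantumMatrix q (op (-d)) (op (-(q⁻¹ • c))) (op (q • b)) (op a) where
  b_mul_a := unop_injective <| by simp [h.d_mul_c, smul_smul, hq]
  c_mul_a := unop_injective <| by simp [h.d_mul_b]
  d_mul_b := unop_injective <| by simp [h.c_mul_a, smul_smul, hq]
  d_mul_c := unop_injective <| by simp [h.b_mul_a]
  b_mul_c := unop_injective <| by simp [h.b_mul_c, smul_smul, hq]
  a_mul_d_add_d_mul_a := unop_injective <| by
    simp [← h.a_mul_d_add_d_mul_a, smul_smul, hq, add_comm]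

theorem mul_right (h : IsTwistedQuantumMatrix q a b c d) (ha : SemiconjBy a t (-t))
    (hb : SemiconjBy b t (-t)) (hc : SemiconjBy c t (-t)) (hd : SemiconjBy d t (-t)) :
    IsTwistedQuantumMatrix q (a * t) (b * t) (c * t) (d * t) := by
  constructor <;>
    simp only [mul_mul_mul_of_semiconjBy_neg _ ha, mul_mul_mul_of_semiconjBy_neg _ hb,
      mul_mul_mul_of_semiconjBy_neg _ hc, mul_mul_mul_of_semiconjBy_neg _ hd]
  case a_mul_d_add_d_mul_a =>
    rw [← neg_add, ← add_mul, h.a_mul_d_add_d_mul_a, smul_mul_assoc, smul_neg]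
  all_goals simp [h.b_mul_a, h.c_mul_a, h.d_mul_b, h.d_mul_c, h.b_mul_c]

end IsTwistedQuantumMatrix

theorem twistedDet_adjugate (hq : q ≠ 0) (a b c d : B) :
    twistedDet q (op (-d)) (op (-(q⁻¹ • c))) (op (q • b)) (op a) = -op (twistedDet q a b c d) :=
  unop_injective <| by simp [twistedDet, smul_smul, hq, add_comm]

theorem twistedDet_mul_right (hc : SemiconjBy c t (-t)) (hd : SemiconjBy d t (-t)) :
    twistedDet q (a * t) (b * t) (c * t) (d * t) = -(twistedDet q a b c d * (t * t)) := by
  simp only [twistedDet, mul_mul_mul_of_semiconjBy_neg _ hc, mul_mul_mul_of_semiconjBy_neg _ hd]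
  rw [add_mul, smul_mul_assoc, smul_neg, neg_add]

namespace IsGLq22Point

theorem commute_det (h : IsGLq22Point q a b c d t) : Commute (twistedDet q a b c d) t :=
  (commute_mul_of_semiconjBy_neg h.a_semiconj h.d_semiconj).add_left
    ((commute_mul_of_semiconjBy_neg h.b_semiconj h.c_semiconj).smul_left _)

theorem mul_det (h : IsGLq22Point q a b c d t) : t * twistedDet q a b c d = 1 :=
  h.commute_det.eq ▸ h.det_mul

theorem semiconjBy_det (h : IsGLq22Point q a b c d t) {x : B} (hx : SemiconjBy x t (-t)) :
    SemiconjBy x (twistedDet q a b c d) (-twistedDet q a b c d) :=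
  semiconjBy_neg_of_inverse hx h.det_mul h.mul_det

theorem adjugate_mul_op (h : IsGLq22Point q a b c d t) :
    op (-d) * op t = op (d * t) ∧ op (-(q⁻¹ • c)) * op t = op (q⁻¹ • (c * t)) := by
  simp [← op_mul, h.d_semiconj.eq, h.c_semiconj.eq]

theorem twistedDet_adjoint (hq : q ≠ 0) (h : IsGLq22Point q a b c d t) :
    twistedDet q (op (d * t)) (op (q⁻¹ • (c * t))) (op (q • (t * b))) (op (t * a)) = op t := by
  obtain ⟨hd, hc⟩ := h.adjugate_mul_op
  rw [← hd, ← hc, ← mul_smul_comm, op_mul t, op_mul t, twistedDet_mul_right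
    (semiconjBy_neg_op (semiconjBy_neg_smul q h.b_semiconj)) (semiconjBy_neg_op h.a_semiconj),
    twistedDet_adjugate hq, neg_mul, neg_neg, ← op_mul, ← op_mul, mul_assoc, h.mul_det, mul_one]

theorem adjoint (hq : q ≠ 0) (h : IsGLq22Point q a b c d t) :
    IsGLq22Point q (op (d * t)) (op (q⁻¹ • (c * t))) (op (q • (t * b))) (op (t * a))
      (op (twistedDet q a b c d)) where
  toIsTwistedQuantumMatrix := by
    obtain ⟨hd, hc⟩ := h.adjugate_mul_op
    rw [← hd, ← hc, ← mul_smul_comm, op_mul t, op_mul t]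
    have hneg {x : B} (hx : SemiconjBy x t (-t)) : SemiconjBy (-x) t (-t) := by simpa using hx
    exact (h.toIsTwistedQuantumMatrix.adjugate hq).mul_right
      (semiconjBy_neg_op (hneg h.d_semiconj))
      (semiconjBy_neg_op (hneg (semiconjBy_neg_smul _ h.c_semiconj)))
      (semiconjBy_neg_op (semiconjBy_neg_smul _ h.b_semiconj))
      (semiconjBy_neg_op h.a_semiconj)
  a_semiconj := semiconjBy_neg_op <|
    (h.semiconjBy_det h.d_semiconj).mul_left h.commute_det.symm
  b_semiconj := semiconjBy_neg_op <| semiconjBy_neg_smul _ <|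
    (h.semiconjBy_det h.c_semiconj).mul_left h.commute_det.symm
  c_semiconj := semiconjBy_neg_op <| semiconjBy_neg_smul _ <|
    h.commute_det.symm.semiconjBy.neg_right.mul_left (h.semiconjBy_det h.b_semiconj)
  d_semiconj := semiconjBy_neg_op <|
    h.commute_det.symm.semiconjBy.neg_right.mul_left (h.semiconjBy_det h.a_semiconj)
  det_mul := by rw [h.twistedDet_adjoint hq, ← op_mul, h.det_mul, op_one]

end IsGLq22Point
end Relations

section Lift

variable {k K X B : Type*} [CommSemiring k] [CommSemiring K] [Semiring B] [Algebra K B]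

/-- The `σ`-semilinear ring homomorphism out of a free algebra extending `g`, which is the linear
one for the `k`-algebra structure on `B` restricted along `σ`. -/
def semilinearLift (σ : k →+* K) (g : X → B) : FreeAlgebra k X →+* B :=
  letI := Algebra.compHom B σ
  (FreeAlgebra.lift k g).toRingHom

theorem semilinearLift_ι (σ : k →+* K) (g : X → B) (x : X) :
    semilinearLift σ g (FreeAlgebra.ι k x) = g x :=
  letI := Algebra.compHom B σ
  FreeAlgebra.lift_ι_apply g x

theorem semilinearLift_smul (σ : k →+* K) (g : X → B) (r : k) (p : FreeAlgebra k X) :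
    semilinearLift σ g (r • p) = σ r • semilinearLift σ g p :=
  letI := Algebra.compHom B σ
  map_smul (FreeAlgebra.lift k g) r p

end Lift

/-- The assignment of values to the generators of `GL_q(2,-2)`. -/
def ZGen.eval {B : Type*} (a b c d t : B) : ZGen → B
  | .z11 => a
  | .z12 => b
  | .z21 => c
  | .z22 => d
  | .tau => t

namespace GLq22

section UniversalProperty

variable {k : Type} {K B : Type*} [Field k] [Field K] [Ring B] [Algebra K B] {σ : k →+* K} {q : k}
  {a b c d t : B}

theorem isGLq22Point (q : k) :
    IsGLq22Point q (zM k q 0 0) (zM k q 0 1) (zM k q 1 0) (zM k q 1 1) (tauE k q) := by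
  have rel {x y} (h : GLq22Rel k q x y) := RingQuot.mkAlgHom_rel k h
  refine ⟨⟨?_, ?_, ?_, ?_, ?_, ?_⟩, ?_, ?_, ?_, ?_, ?_⟩
  · simpa [zM] using rel .r1
  · simpa [zM] using rel .r2
  · simpa [zM] using rel .r3
  · simpa [zM] using rel .r4
  · simpa [zM] using rel .r5
  · simpa only [map_add, map_mul, map_smul, zM, Matrix.cons_val] using rel .r6
  · exact semiconjBy_neg_iff.2 (by simpa [zM, tauE] using rel .r7)
  · exact semiconjBy_neg_iff.2 (by simpa [zM, tauE] using rel .r9)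
  · exact semiconjBy_neg_iff.2 (by simpa [zM, tauE] using rel .r10)
  · exact semiconjBy_neg_iff.2 (by simpa [zM, tauE] using rel .r8)
  · simpa [zM, tauE, twistedDet] using rel .r11

theorem semilinearLift_eq_of_rel (h : IsGLq22Point (σ q) a b c d t) {x y : FreeAlgebra k ZGen}
    (hxy : GLq22Rel k q x y) :
    semilinearLift σ (ZGen.eval a b c d t) x = semilinearLift σ (ZGen.eval a b c d t) y := by
  cases hxy <;>
    simp only [Zf, map_mul, map_add, map_neg, map_sub, map_one, map_inv₀, semilinearLift_smul,
      semilinearLift_ι, ZGen.eval]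
  case r1 => exact h.b_mul_a
  case r2 => exact h.c_mul_a
  case r3 => exact h.d_mul_b
  case r4 => exact h.d_mul_c
  case r5 => exact h.b_mul_c
  case r6 => exact h.a_mul_d_add_d_mul_a
  case r7 => exact semiconjBy_neg_iff.1 h.a_semiconj
  case r8 => exact semiconjBy_neg_iff.1 h.d_semiconj
  case r9 => exact semiconjBy_neg_iff.1 h.b_semiconj
  case r10 => exact semiconjBy_neg_iff.1 h.c_semiconj
  case r11 => exact h.det_mul

/-- The universal property of `GL_q(2,-2)`, in semilinear form. -/
def lift (h : IsGLq22Point (σ q) a b c d t) : GLq22 k q →+* B :=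
  RingQuot.lift ⟨semilinearLift σ (ZGen.eval a b c d t), fun _ _ => semilinearLift_eq_of_rel h⟩

theorem lift_mkAlgHom (h : IsGLq22Point (σ q) a b c d t) (p : FreeAlgebra k ZGen) :
    lift h (RingQuot.mkAlgHom k (GLq22Rel k q) p) = semilinearLift σ (ZGen.eval a b c d t) p := by
  rw [← AlgHom.coe_toRingHom, RingQuot.mkAlgHom_coe]
  exact RingQuot.lift_mkRingHom_apply _ _ p

theorem lift_zM (h : IsGLq22Point (σ q) a b c d t) (i j : Fin 2) :
    lift h (zM k q i j) = !![a, b; c, d] i j := by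
  fin_cases i <;> fin_cases j <;> exact (lift_mkAlgHom h _).trans (semilinearLift_ι _ _ _)

theorem lift_tauE (h : IsGLq22Point (σ q) a b c d t) : lift h (tauE k q) = t :=
  (lift_mkAlgHom h _).trans (semilinearLift_ι _ _ _)

theorem lift_smul (h : IsGLq22Point (σ q) a b c d t) (r : k) (x : GLq22 k q) :
    lift h (r • x) = σ r • lift h x := by
  obtain ⟨p, rfl⟩ := RingQuot.mkAlgHom_surjective k (GLq22Rel k q) x
  rw [← map_smul, lift_mkAlgHom, lift_mkAlgHom, semilinearLift_smul]

@[elab_as_elim]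
theorem induction {P : GLq22 k q → Prop} (zM : ∀ i j, P (zM k q i j)) (tauE : P (tauE k q))
    (algebraMap : ∀ r, P (algebraMap k (GLq22 k q) r))
    (add : ∀ x y, P x → P y → P (x + y)) (mul : ∀ x y, P x → P y → P (x * y))
    (x : GLq22 k q) : P x := by
  obtain ⟨p, rfl⟩ := RingQuot.mkAlgHom_surjective k (GLq22Rel k q) x
  induction p using FreeAlgebra.induction with
  | grade0 r => simpa using algebraMap r
  | grade1 g =>
    cases g
    exacts [zM 0 0, zM 0 1, zM 1 0, zM 1 1, tauE]
  | mul x y hx hy => simpa using mul _ _ hx hy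
  | add x y hx hy => simpa using add _ _ hx hy

end UniversalProperty

section Star

variable {k : Type} [Field k] [StarRing k] {q : k}

theorem isGLq22Point_adjoint (hq : q ≠ 0) (hq_sa : IsSelfAdjoint q) :
    IsGLq22Point (starRingEnd k q) (op (zM k q 1 1 * tauE k q))
      (op (q⁻¹ • (zM k q 1 0 * tauE k q))) (op (q • (tauE k q * zM k q 0 1)))
      (op (tauE k q * zM k q 0 0))
      (op (twistedDet q (zM k q 0 0) (zM k q 0 1) (zM k q 1 0) (zM k q 1 1))) := by
  rw [starRingEnd_apply, hq_sa.star_eq]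
  exact (isGLq22Point q).adjoint hq

/-- The star of `U_q(2,-2)`, as a conjugate-linear ring homomorphism to the opposite ring. -/
def starHom (hq : q ≠ 0) (hq_sa : IsSelfAdjoint q) : GLq22 k q →+* (GLq22 k q)ᵐᵒᵖ :=
  lift (isGLq22Point_adjoint hq hq_sa)

theorem starHom_smul (hq : q ≠ 0) (hq_sa : IsSelfAdjoint q) (r : k) (x : GLq22 k q) :
    starHom hq hq_sa (r • x) = star r • starHom hq hq_sa x :=
  lift_smul _ r x

theorem starHom_zM (hq : q ≠ 0) (hq_sa : IsSelfAdjoint q) (i j : Fin 2) :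
    starHom hq hq_sa (zM k q i j) =
      !![op (zM k q 1 1 * tauE k q), op (q⁻¹ • (zM k q 1 0 * tauE k q));
        op (q • (tauE k q * zM k q 0 1)), op (tauE k q * zM k q 0 0)] i j :=
  lift_zM _ i j

theorem starHom_tauE (hq : q ≠ 0) (hq_sa : IsSelfAdjoint q) :
    starHom hq hq_sa (tauE k q) =
      op (twistedDet q (zM k q 0 0) (zM k q 0 1) (zM k q 1 0) (zM k q 1 1)) :=
  lift_tauE _

theorem starHom_twistedDet (hq : q ≠ 0) (hq_sa : IsSelfAdjoint q) :
    starHom hq hq_sa (twistedDet q (zM k q 0 0) (zM k q 0 1) (zM k q 1 0) (zM k q 1 1)) =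
      op (tauE k q) := by
  rw [← (isGLq22Point q).twistedDet_adjoint hq]
  simp [twistedDet, starHom_smul, starHom_zM, hq_sa.star_eq]

theorem starHom_unop_starHom (hq : q ≠ 0) (hq_sa : IsSelfAdjoint q) (x : GLq22 k q) :
    starHom hq hq_sa (starHom hq hq_sa x).unop = op x := by
  have det_mul := (isGLq22Point q).det_mul
  have mul_det := (isGLq22Point q).mul_det
  induction x using induction with
  | zM i j =>
    fin_cases i <;> fin_cases j <;>
      simp [starHom_zM, starHom_tauE, starHom_smul, hq_sa.star_eq, hq, smul_smul, ← op_mul,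
        mul_assoc, mul_det, ← mul_assoc _ (tauE k q), det_mul]
  | tauE => rw [starHom_tauE, unop_op, starHom_twistedDet]
  | algebraMap r => simp [Algebra.algebraMap_eq_smul_one, starHom_smul]
  | add x y hx hy => simp [hx, hy]
  | mul x y hx hy => simp [hx, hy]

/-- The values on the generators of the star of `U_q(2,-2)`. -/
structure IsUq22Star (q : k) [Star (GLq22 k q)] : Prop where
  star_z11 : star (zM k q 0 0) = zM k q 1 1 * tauE k q
  star_z12 : star (zM k q 0 1) = q⁻¹ • (zM k q 1 0 * tauE k q)
  star_z21 : star (zM k q 1 0) = q • (tauE k q * zM k q 0 1)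
  star_z22 : star (zM k q 1 1) = tauE k q * zM k q 0 0
  star_tau : star (tauE k q) =
    zM k q 0 0 * zM k q 1 1 + q⁻¹ • (zM k q 0 1 * zM k q 1 0)

theorem exists_starRing (hq : q ≠ 0) (hq_sa : IsSelfAdjoint q) :
    ∃ _ : StarRing (GLq22 k q), StarModule k (GLq22 k q) ∧ IsUq22Star q := by
  let starRing : StarRing (GLq22 k q) :=
    { star x := (starHom hq hq_sa x).unop
      star_involutive x := op_injective (starHom_unop_starHom hq hq_sa x)
      star_mul x y := by simp
      star_add x y := by simp }
  refine ⟨starRing, ⟨fun r x => congrArg unop (starHom_smul hq hq_sa r x)⟩, ?_⟩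
  exact
    { star_z11 := congrArg unop (starHom_zM hq hq_sa 0 0)
      star_z12 := congrArg unop (starHom_zM hq hq_sa 0 1)
      star_z21 := congrArg unop (starHom_zM hq hq_sa 1 0)
      star_z22 := congrArg unop (starHom_zM hq hq_sa 1 1)
      star_tau := congrArg unop (starHom_tauE hq hq_sa) }

end Star

end GLq22

section Coaction

theorem neg_smul_tmul {k M N : Type*} [CommRing k] [AddCommGroup M] [Module k M] [AddCommGroup N]
    [Module k N] (r : k) (x : M) (y : N) : (-(r • x)) ⊗ₜ[k] y = r • (x ⊗ₜ[k] (-y)) := by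
  rw [TensorProduct.neg_tmul, TensorProduct.tmul_neg, smul_neg, TensorProduct.smul_tmul']

variable {k : Type} [Field k] {q : k}

theorem commute_xM_tE (q : k) (i j : Fin 2) : Commute (xM k q i j) (tE k q) := by
  have rel {x y} (h : GLq2Rel k q x y) := RingQuot.mkAlgHom_rel k h
  fin_cases i <;> fin_cases j
  · simpa [xM, tE, Commute, SemiconjBy] using rel .r7
  · simpa [xM, tE, Commute, SemiconjBy] using rel .r9
  · simpa [xM, tE, Commute, SemiconjBy] using rel .r10
  · simpa [xM, tE, Commute, SemiconjBy] using rel .r8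

theorem xM_det_mul_tE (q : k) :
    (xM k q 0 0 * xM k q 1 1 - q⁻¹ • (xM k q 0 1 * xM k q 1 0)) * tE k q = 1 := by
  simpa only [map_mul, map_sub, map_smul, map_one, xM, tE, Matrix.cons_val] using
    RingQuot.mkAlgHom_rel k (GLq2Rel.r11 (k := k) (q := q))

/-- The values on the generators of the standard star of `U_q(2)`. -/
structure IsUq2Star (q : k) [Star (GLq2 k q)] : Prop where
  star_x11 : star (xM k q 0 0) = xM k q 1 1 * tE k q
  star_x12 : star (xM k q 0 1) = -(q⁻¹ • (xM k q 1 0 * tE k q))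
  star_x21 : star (xM k q 1 0) = -(q • (xM k q 0 1 * tE k q))
  star_x22 : star (xM k q 1 1) = xM k q 0 0 * tE k q
  star_t : star (tE k q) = xM k q 0 0 * xM k q 1 1 - q⁻¹ • (xM k q 0 1 * xM k q 1 0)

/-- The coaction `α` of `GL_q(2)` on `GL_q(2,-2)`, characterised by its values on generators. -/
structure IsCoaction (α : GLq22 k q →ₐ[k] GLq2 k q ⊗[k] GLq22 k q) : Prop where
  map_zM : ∀ i j, α (zM k q i j) = ∑ l, xM k q i l ⊗ₜ[k] zM k q l j
  map_tauE : α (tauE k q) = tE k q ⊗ₜ[k] tauE k q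

namespace IsCoaction

variable [StarRing k] [StarRing (GLq2 k q)] [StarModule k (GLq2 k q)] [StarRing (GLq22 k q)]
  [StarModule k (GLq22 k q)] {α : GLq22 k q →ₐ[k] GLq2 k q ⊗[k] GLq22 k q}

theorem map_star_zM (hα : IsCoaction α) (hX : IsUq2Star q) (hZ : GLq22.IsUq22Star q) (hq : q ≠ 0)
    (i j : Fin 2) : α (star (zM k q i j)) = star (α (zM k q i j)) := by
  have Z := GLq22.isGLq22Point q
  have hxt i j := (commute_xM_tE q i j).eq
  fin_cases i <;> fin_cases j <;>
    simp only [Fin.zero_eta, Fin.mk_one, hα.map_zM, hα.map_tauE, Fin.sum_univ_two, map_mul,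
      map_smul, star_add, TensorProduct.star_tmul, hX.star_x11, hX.star_x12, hX.star_x21,
      hX.star_x22, hZ.star_z11, hZ.star_z12, hZ.star_z21, hZ.star_z22, add_mul, mul_add, smul_add,
      Algebra.TensorProduct.tmul_mul_tmul, TensorProduct.tmul_smul, neg_smul_tmul]
  · rw [← semiconjBy_neg_iff.1 Z.b_semiconj, smul_inv_smul₀ hq, add_comm]
  · rw [← semiconjBy_neg_iff.1 Z.a_semiconj, add_comm]
  · rw [semiconjBy_neg_iff.1 Z.d_semiconj, neg_neg, hxt, hxt, add_comm]
  · rw [semiconjBy_neg_iff.1 Z.c_semiconj, neg_neg, hxt, hxt, inv_smul_smul₀ hq, add_comm]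

theorem map_star_tauE (hα : IsCoaction α) (hX : IsUq2Star q) (hZ : GLq22.IsUq22Star q) :
    α (star (tauE k q)) = star (α (tauE k q)) := by
  have hZ_tau : star (tauE k q) =
      twistedDet q (zM k q 0 0) (zM k q 0 1) (zM k q 1 0) (zM k q 1 1) := hZ.star_tau
  have star_mul : star (α (tauE k q)) * α (tauE k q) = 1 := by
    rw [hα.map_tauE, TensorProduct.star_tmul, Algebra.TensorProduct.tmul_mul_tmul, hX.star_t,
      xM_det_mul_tE, hZ_tau, (GLq22.isGLq22Point q).det_mul, Algebra.TensorProduct.one_def]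
  have mul_star : α (tauE k q) * α (star (tauE k q)) = 1 := by
    rw [← map_mul, hZ_tau, (GLq22.isGLq22Point q).mul_det, map_one]
  exact (left_inv_eq_right_inv star_mul mul_star).symm

theorem map_star (hα : IsCoaction α) (hX : IsUq2Star q) (hZ : GLq22.IsUq22Star q) (hq : q ≠ 0)
    (x : GLq22 k q) : α (star x) = star (α x) := by
  induction x using GLq22.induction with
  | zM i j => exact hα.map_star_zM hX hZ hq i j
  | tauE => exact hα.map_star_tauE hX hZ
  | algebraMap r => simp [← algebraMap_star_comm]
  | add x y hx hy => simp [hx, hy]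
  | mul x y hx hy => simp [hx, hy]

end IsCoaction

end Coaction

theorem Uq22_star_structure_general {k : Type} [Field k] [StarRing k] {q : k} (hq : q ≠ 0)
    (hq_sa : IsSelfAdjoint q) (sA : GLq2 k q → GLq2 k q)
    (hsAadd : ∀ x y, sA (x + y) = sA x + sA y)
    (hsAsmul : ∀ (c : k) x, sA (c • x) = starRingEnd k c • sA x)
    (hsAinv : ∀ x, sA (sA x) = x)
    (hsAmul : ∀ x y, sA (x * y) = sA y * sA x)
    (hsA11 : sA (xM k q 0 0) = xM k q 1 1 * tE k q)
    (hsA12 : sA (xM k q 0 1) = -(q⁻¹ • (xM k q 1 0 * tE k q)))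
    (hsA21 : sA (xM k q 1 0) = -(q • (xM k q 0 1 * tE k q)))
    (hsA22 : sA (xM k q 1 1) = xM k q 0 0 * tE k q)
    (hsAt : sA (tE k q) = xM k q 0 0 * xM k q 1 1 - q⁻¹ • (xM k q 0 1 * xM k q 1 0))
    (α : GLq22 k q →ₐ[k] GLq2 k q ⊗[k] GLq22 k q)
    (hα : ∀ i j : Fin 2, α (zM k q i j) = ∑ l : Fin 2, xM k q i l ⊗ₜ[k] zM k q l j)
    (hατ : α (tauE k q) = tE k q ⊗ₜ[k] tauE k q) :
    ∃ sZ : GLq22 k q → GLq22 k q,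
      (∀ x y, sZ (x + y) = sZ x + sZ y) ∧
      (∀ (c : k) x, sZ (c • x) = starRingEnd k c • sZ x) ∧
      (∀ x, sZ (sZ x) = x) ∧
      (∀ x y, sZ (x * y) = sZ y * sZ x) ∧
      sZ (zM k q 0 0) = zM k q 1 1 * tauE k q ∧
      sZ (zM k q 0 1) = q⁻¹ • (zM k q 1 0 * tauE k q) ∧
      sZ (zM k q 1 0) = q • (tauE k q * zM k q 0 1) ∧
      sZ (zM k q 1 1) = tauE k q * zM k q 0 0 ∧
      sZ (tauE k q) = zM k q 0 0 * zM k q 1 1 + q⁻¹ • (zM k q 0 1 * zM k q 1 0) ∧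
      ∃ S : GLq2 k q ⊗[k] GLq22 k q → GLq2 k q ⊗[k] GLq22 k q,
        (∀ u v, S (u + v) = S u + S v) ∧
        (∀ (a : GLq2 k q) (z : GLq22 k q), S (a ⊗ₜ[k] z) = sA a ⊗ₜ[k] sZ z) ∧
        ∀ x, α (sZ x) = S (α x) := by
  let _ : StarRing (GLq2 k q) :=
    { star := sA, star_involutive := hsAinv, star_mul := hsAmul, star_add := hsAadd }
  have : StarModule k (GLq2 k q) := ⟨hsAsmul⟩
  have hX : IsUq2Star q := ⟨hsA11, hsA12, hsA21, hsA22, hsAt⟩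
  obtain ⟨_, _, hZ⟩ := GLq22.exists_starRing hq hq_sa
  exact ⟨star, star_add, star_smul, star_star, star_mul, hZ.star_z11, hZ.star_z12, hZ.star_z21,
    hZ.star_z22, hZ.star_tau, star, star_add, TensorProduct.star_tmul,
    IsCoaction.map_star ⟨hα, hατ⟩ hX hZ hq⟩

/-- Let `q` be a nonzero real number.  There is a conjugate-linear, involutive,
anti-multiplicative star on `GL_q(2,-2)` with `z11* = z22 τ`,
`z12* = q⁻¹ z21 τ`, `z21* = q τ z12`, `z22* = τ z11` and
`τ* = z11 z22 + q⁻¹ z12 z21` (the *-algebra `U_q(2,-2)`); moreover the coaction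
`α : U_q(2,-2) → U_q(2) ⊗ U_q(2,-2)` is a *-homomorphism, where `U_q(2)` is
`GL_q(2)` with its standard *-structure `sA` and the star on the tensor product
is `(a ⊗ b)* = a* ⊗ b*`. -/
theorem Uq22_star_structure (q : ℝ) (hq : q ≠ 0)
    -- the standard *-structure of `U_q(2)`
    (sA : GLq2 ℂ (q : ℂ) → GLq2 ℂ (q : ℂ))
    (hsAadd : ∀ x y, sA (x + y) = sA x + sA y)
    (hsAsmul : ∀ (c : ℂ) x, sA (c • x) = (starRingEnd ℂ) c • sA x)
    (hsAinv : ∀ x, sA (sA x) = x)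
    (hsAmul : ∀ x y, sA (x * y) = sA y * sA x)
    (hsA11 : sA (xM ℂ (q : ℂ) 0 0) = xM ℂ (q : ℂ) 1 1 * tE ℂ (q : ℂ))
    (hsA12 : sA (xM ℂ (q : ℂ) 0 1) = -((q : ℂ)⁻¹ • (xM ℂ (q : ℂ) 1 0 * tE ℂ (q : ℂ))))
    (hsA21 : sA (xM ℂ (q : ℂ) 1 0) = -((q : ℂ) • (xM ℂ (q : ℂ) 0 1 * tE ℂ (q : ℂ))))
    (hsA22 : sA (xM ℂ (q : ℂ) 1 1) = xM ℂ (q : ℂ) 0 0 * tE ℂ (q : ℂ))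
    (hsAt : sA (tE ℂ (q : ℂ)) =
      xM ℂ (q : ℂ) 0 0 * xM ℂ (q : ℂ) 1 1 - (q : ℂ)⁻¹ • (xM ℂ (q : ℂ) 0 1 * xM ℂ (q : ℂ) 1 0))
    -- the coaction
    (α : GLq22 ℂ (q : ℂ) →ₐ[ℂ] GLq2 ℂ (q : ℂ) ⊗[ℂ] GLq22 ℂ (q : ℂ))
    (hα : ∀ i j : Fin 2,
      α (zM ℂ (q : ℂ) i j) = ∑ l : Fin 2, xM ℂ (q : ℂ) i l ⊗ₜ[ℂ] zM ℂ (q : ℂ) l j)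
    (hατ : α (tauE ℂ (q : ℂ)) = tE ℂ (q : ℂ) ⊗ₜ[ℂ] tauE ℂ (q : ℂ)) :
    ∃ sZ : GLq22 ℂ (q : ℂ) → GLq22 ℂ (q : ℂ),
      (∀ x y, sZ (x + y) = sZ x + sZ y) ∧
      (∀ (c : ℂ) x, sZ (c • x) = (starRingEnd ℂ) c • sZ x) ∧
      (∀ x, sZ (sZ x) = x) ∧
      (∀ x y, sZ (x * y) = sZ y * sZ x) ∧
      sZ (zM ℂ (q : ℂ) 0 0) = zM ℂ (q : ℂ) 1 1 * tauE ℂ (q : ℂ) ∧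
      sZ (zM ℂ (q : ℂ) 0 1) = (q : ℂ)⁻¹ • (zM ℂ (q : ℂ) 1 0 * tauE ℂ (q : ℂ)) ∧
      sZ (zM ℂ (q : ℂ) 1 0) = (q : ℂ) • (tauE ℂ (q : ℂ) * zM ℂ (q : ℂ) 0 1) ∧
      sZ (zM ℂ (q : ℂ) 1 1) = tauE ℂ (q : ℂ) * zM ℂ (q : ℂ) 0 0 ∧
      sZ (tauE ℂ (q : ℂ)) =
        zM ℂ (q : ℂ) 0 0 * zM ℂ (q : ℂ) 1 1 + (q : ℂ)⁻¹ • (zM ℂ (q : ℂ) 0 1 * zM ℂ (q : ℂ) 1 0) ∧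
      -- the coaction `α` is a *-homomorphism
      ∃ S : GLq2 ℂ (q : ℂ) ⊗[ℂ] GLq22 ℂ (q : ℂ) → GLq2 ℂ (q : ℂ) ⊗[ℂ] GLq22 ℂ (q : ℂ),
        (∀ u v, S (u + v) = S u + S v) ∧
        (∀ (a : GLq2 ℂ (q : ℂ)) (z : GLq22 ℂ (q : ℂ)), S (a ⊗ₜ[ℂ] z) = sA a ⊗ₜ[ℂ] sZ z) ∧
        ∀ x, α (sZ x) = S (α x) :=
  Uq22_star_structure_general (Complex.ofReal_ne_zero.2 hq) (Complex.conj_ofReal q) sA hsAadd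
    hsAsmul hsAinv hsAmul hsA11 hsA12 hsA21 hsA22 hsAt α hα hατ

end
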